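/- arXiv:2208.05268 — 2 statements merged into one kernel-verified Lean document; each statement's English description precedes it below -/
import Mathlib

section
/- Let B be a real Banach space and let f : B → ℝ ∪ {+∞} be any function that admits at least one continuous affine minorant. Then the biconjugate x ↦ sup_{y ∈ B*} (⟨y, x⟩ − f*(y)), where f*(y) = sup_{x' ∈ B} (⟨y, x'⟩ − f(x')), is the largest convex lower semicontinuous function that is everywhere less than or equal to f; that is, it is a convex lower semicontinuous minorant of f, and every convex lower semicontinuous function g with g ≤ f satisfies g ≤ f** pointwise. -/
/-- Convexity for `EReal`-valued functions on a real vector space. -/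
def ConvexE {B : Type*} [AddCommGroup B] [Module ℝ B] (f : B → EReal) : Prop :=
  ∀ x y : B, ∀ a b : ℝ, 0 ≤ a → 0 ≤ b → a + b = 1 →
    f (a • x + b • y) ≤ (a : EReal) * f x + (b : EReal) * f y

/-- The biconjugate of `f : B → EReal`, computed through the dual pairing. -/
noncomputable def biconj {B : Type*} [NormedAddCommGroup B] [NormedSpace ℝ B]
    (f : B → EReal) : B → EReal :=
  fun x => ⨆ y : B →L[ℝ] ℝ, ((y x : EReal) - ⨆ x' : B, ((y x' : EReal) - f x'))

theorem le_biconj_of_minorant {B : Type*} [NormedAddCommGroup B] [NormedSpace ℝ B]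
    (f : B → EReal) (y : B →L[ℝ] ℝ) (a : ℝ) (h : ∀ x, ((y x + a : ℝ) : EReal) ≤ f x) (x : B) :
    ((y x + a : ℝ) : EReal) ≤ biconj f x := by
  have h1 : (⨆ x' : B, ((y x' : EReal) - f x')) ≤ ((-a : ℝ) : EReal) := by
    refine iSup_le fun x' => ?_
    refine (EReal.sub_le_sub le_rfl (h x')).trans ?_
    rw [← EReal.coe_sub]
    exact EReal.coe_le_coe_iff.2 (by linarith)
  refine le_trans ?_ (le_iSup (fun y : B →L[ℝ] ℝ =>
    ((y x : EReal) - ⨆ x' : B, ((y x' : EReal) - f x'))) y)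
  refine le_trans ?_ (EReal.sub_le_sub le_rfl h1)
  rw [← EReal.coe_sub]
  exact EReal.coe_le_coe_iff.2 (by linarith)

theorem biconj_le_of_minorant {B : Type*} [NormedAddCommGroup B] [NormedSpace ℝ B]
    (f : B → EReal) (x : B) (t : EReal)
    (h : ∀ (y : B →L[ℝ] ℝ) (a : ℝ), (∀ x, ((y x + a : ℝ) : EReal) ≤ f x) →
      ((y x + a : ℝ) : EReal) ≤ t) : biconj f x ≤ t := by
  refine iSup_le fun y => ?_
  have hc : ∀ x', (y x' : EReal) - f x' ≤ ⨆ x' : B, ((y x' : EReal) - f x') :=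
    fun x' => le_iSup (fun x' => (y x' : EReal) - f x') x'
  generalize (⨆ x' : B, ((y x' : EReal) - f x')) = c at hc
  have key : ∀ a : ℝ, c ≤ (a : EReal) → ((y x + -a : ℝ) : EReal) ≤ t := by
    intro a ha
    refine h y (-a) fun x' => ?_
    have h2 := (hc x').trans ha
    generalize f x' = v at h2
    induction v with
    | bot => simp at h2
    | top => exact le_top
    | coe v =>
      rw [← EReal.coe_sub, EReal.coe_le_coe_iff] at h2
      exact EReal.coe_le_coe_iff.2 (by linarith)
  induction c with
  | bot =>
    have ht : t = ⊤ := by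
      rw [EReal.eq_top_iff_forall_lt]
      intro r
      refine lt_of_lt_of_le ?_ (key (y x - (r + 1)) bot_le)
      exact EReal.coe_lt_coe_iff.2 (by linarith)
    rw [ht]; exact le_top
  | top => simp
  | coe c =>
    have := key c le_rfl
    rwa [← sub_eq_add_neg, EReal.coe_sub] at this

theorem epi_sep {B : Type*} [NormedAddCommGroup B] [NormedSpace ℝ B]
    (g : B → EReal) (hg : ConvexE g) (hl : LowerSemicontinuous g)
    (x1 : B) (t1 : ℝ) (h1 : g x1 ≤ t1) (x0 : B) (r : ℝ) (hr : (r : EReal) < g x0) :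
    ∃ (φ : B →L[ℝ] ℝ) (s u : ℝ), 0 ≤ s ∧ φ x0 + s * r < u ∧
      ∀ (x : B) (t : ℝ), g x ≤ t → u < φ x + s * t := by
  have hclosed : IsClosed {p : B × ℝ | g p.1 ≤ (p.2 : EReal)} := by
    have := hl.isClosed_epigraph
    exact this.preimage (f := fun p : B × ℝ => (p.1, (p.2 : EReal)))
      (by have := continuous_coe_real_ereal; fun_prop)
  have hconv : Convex ℝ {p : B × ℝ | g p.1 ≤ (p.2 : EReal)} := by
    rintro ⟨x, t⟩ hx ⟨y, w⟩ hy a b ha hb hab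
    simp only [Set.mem_setOf_eq] at hx hy
    change g (a • x + b • y) ≤ ((a * t + b * w : ℝ) : EReal)
    refine (hg x y a b ha hb hab).trans ?_
    rw [EReal.coe_add, EReal.coe_mul, EReal.coe_mul]
    exact add_le_add (mul_le_mul_of_nonneg_left hx (EReal.coe_nonneg.2 ha))
      (mul_le_mul_of_nonneg_left hy (EReal.coe_nonneg.2 hb))
  obtain ⟨F, u, hF0, hF⟩ := geometric_hahn_banach_point_closed (x := (x0, r)) hconv hclosed
    (by simpa using hr)
  have hdec : ∀ x t, F (x, t) = F (x, 0) + F (0, 1) * t := by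
    intro x t
    have : ((x, t) : B × ℝ) = (x, 0) + t • (0, 1) := by simp
    rw [this, map_add, map_smul, smul_eq_mul, mul_comm]
  have hF' : ∀ (x : B) (t : ℝ), g x ≤ t → u < F (x, 0) + F (0, 1) * t := by
    intro x t hxt
    rw [← hdec]
    exact hF (x, t) hxt
  refine ⟨F.comp (ContinuousLinearMap.inl ℝ B ℝ), F (0, 1), u, ?_, ?_, ?_⟩
  · by_contra! hs
    have hk := hF' x1 (t1 + |(u - F (x1, 0) - F (0, 1) * t1) / F (0, 1)|)
      (h1.trans (EReal.coe_le_coe_iff.2 (le_add_of_nonneg_right (abs_nonneg _))))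
    have h3 := mul_le_mul_of_nonpos_left
      (le_abs_self ((u - F (x1, 0) - F (0, 1) * t1) / F (0, 1))) hs.le
    rw [mul_div_cancel₀ _ hs.ne] at h3
    linarith
  · rw [hdec] at hF0
    simpa using hF0
  · intro x t hxt
    simpa using hF' x t hxt

theorem minorant_of_sep {B : Type*} [NormedAddCommGroup B] [NormedSpace ℝ B]
    (g : B → EReal) (hb : ∀ x, g x ≠ ⊥) (φ : B →L[ℝ] ℝ) (s u : ℝ) (hs : 0 < s)
    (h : ∀ (x : B) (t : ℝ), g x ≤ t → u < φ x + s * t) (x : B) :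
    (((-s⁻¹ • φ) x + s⁻¹ * u : ℝ) : EReal) ≤ g x := by
  have h2 := h x
  have h3 := hb x
  generalize g x = v at h2 h3
  induction v with
  | bot => simp at h3
  | top => exact le_top
  | coe v =>
    have h4 := h2 v le_rfl
    refine EReal.coe_le_coe_iff.2 ?_
    have h5 : s⁻¹ * u ≤ s⁻¹ * (φ x + s * v) :=
      mul_le_mul_of_nonneg_left h4.le (inv_nonneg.2 hs.le)
    have h6 : s⁻¹ * (φ x + s * v) = s⁻¹ * φ x + v := by field_simp
    simp only [ContinuousLinearMap.smul_apply, smul_eq_mul]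
    linarith

theorem exists_minorant {B : Type*} [NormedAddCommGroup B] [NormedSpace ℝ B]
    (g : B → EReal) (hb : ∀ x, g x ≠ ⊥) (hg : ConvexE g) (hl : LowerSemicontinuous g)
    (x0 : B) (r : ℝ) (hr : (r : EReal) < g x0) :
    ∃ (y : B →L[ℝ] ℝ) (a : ℝ), (∀ x, ((y x + a : ℝ) : EReal) ≤ g x) ∧ r ≤ y x0 + a := by
  by_cases htop : ∀ x, g x = ⊤
  · exact ⟨0, r, fun x => by rw [htop]; exact le_top, by simp⟩
  push Not at htop
  obtain ⟨x1, hx1⟩ := htop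
  obtain ⟨t1, ht1⟩ : ∃ t1 : ℝ, g x1 = t1 :=
    ⟨(g x1).toReal, (EReal.coe_toReal hx1 (hb x1)).symm⟩
  have pos : ∀ (φ : B →L[ℝ] ℝ) (s u : ℝ) (x2 : B) (r2 : ℝ), 0 < s → φ x2 + s * r2 < u →
      r2 ≤ (-s⁻¹ • φ) x2 + s⁻¹ * u := by
    intro φ s u x2 r2 hs hu
    have h5 : s⁻¹ * (φ x2 + s * r2) ≤ s⁻¹ * u :=
      mul_le_mul_of_nonneg_left hu.le (inv_nonneg.2 hs.le)
    have h6 : s⁻¹ * (φ x2 + s * r2) = s⁻¹ * φ x2 + r2 := by field_simp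
    simp only [ContinuousLinearMap.smul_apply, smul_eq_mul]
    linarith
  obtain ⟨φ, s, u, hs, hu, hsep⟩ := epi_sep g hg hl x1 t1 ht1.le x0 r hr
  rcases hs.lt_or_eq with hs | hs
  · exact ⟨-s⁻¹ • φ, s⁻¹ * u, minorant_of_sep g hb φ s u hs hsep, pos φ s u x0 r hs hu⟩
  subst hs
  obtain ⟨y, a, hya⟩ : ∃ (y : B →L[ℝ] ℝ) (a : ℝ), ∀ x, ((y x + a : ℝ) : EReal) ≤ g x := by
    obtain ⟨ψ, s, w, hs, hw, hsep'⟩ := epi_sep g hg hl x1 t1 ht1.le x1 (t1 - 1)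
      (by rw [ht1]; exact EReal.coe_lt_coe_iff.2 (by linarith))
    have := hsep' x1 t1 ht1.le
    have hs' : 0 < s := by nlinarith
    exact ⟨-s⁻¹ • ψ, s⁻¹ * w, minorant_of_sep g hb ψ s w hs' hsep'⟩
  have hd : 0 < u - φ x0 := by linarith
  obtain ⟨k, hk0, hk⟩ : ∃ k : ℝ, 0 ≤ k ∧ r - (y x0 + a) ≤ k * (u - φ x0) := by
    refine ⟨|r - (y x0 + a)| / (u - φ x0), by positivity, ?_⟩
    rw [div_mul_cancel₀ _ hd.ne']
    exact le_abs_self _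
  refine ⟨y - k • φ, a + k * u, fun x => ?_, ?_⟩
  · have h2 := hsep x
    have h3 := hya x
    generalize g x = v at h2 h3
    induction v with
    | bot => simp at h3
    | top => exact le_top
    | coe v =>
      have h4 := h2 v le_rfl
      rw [EReal.coe_le_coe_iff] at h3 ⊢
      simp only [ContinuousLinearMap.sub_apply, ContinuousLinearMap.smul_apply, smul_eq_mul]
      nlinarith
  · simp only [ContinuousLinearMap.sub_apply, ContinuousLinearMap.smul_apply, smul_eq_mul]
    linarith

/-- if `f : B → ℝ ∪ {+∞}` admits a continuous affine minorant, then its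
biconjugate is the largest convex lower semicontinuous minorant of `f`. -/
theorem stmt2 {B : Type*} [NormedAddCommGroup B] [NormedSpace ℝ B] [CompleteSpace B]
    (f : B → EReal) (hbot : ∀ x, f x ≠ ⊥)
    (hminorant : ∃ (y : B →L[ℝ] ℝ) (a : ℝ), ∀ x, ((y x + a : ℝ) : EReal) ≤ f x) :
    ConvexE (biconj f) ∧ LowerSemicontinuous (biconj f) ∧
    (∀ x, biconj f x ≤ f x) ∧
    (∀ g : B → EReal, (∀ x, g x ≠ ⊥) → ConvexE g → LowerSemicontinuous g →
      (∀ x, g x ≤ f x) → ∀ x, g x ≤ biconj f x) := by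
  refine ⟨?_, ?_, ?_, ?_⟩
  · intro x y a b ha hb hab
    refine biconj_le_of_minorant f _ _ fun z c hz => ?_
    have e : z (a • x + b • y) + c = a * (z x + c) + b * (z y + c) := by
      simp only [map_add, map_smul, smul_eq_mul]
      linear_combination (-c) * hab
    rw [e, EReal.coe_add, EReal.coe_mul, EReal.coe_mul]
    exact add_le_add
      (mul_le_mul_of_nonneg_left (le_biconj_of_minorant f z c hz x) (EReal.coe_nonneg.2 ha))
      (mul_le_mul_of_nonneg_left (le_biconj_of_minorant f z c hz y) (EReal.coe_nonneg.2 hb))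
  · intro x t ht
    by_contra hcon
    refine absurd ht (not_lt.2 ?_)
    refine biconj_le_of_minorant f _ _ fun z c hz => ?_
    by_contra! hlt
    apply hcon
    have hcont : Continuous fun x' => ((z x' + c : ℝ) : EReal) :=
      continuous_coe_real_ereal.comp (by fun_prop)
    filter_upwards [hcont.continuousAt.eventually (lt_mem_nhds hlt)] with x' hx'
    exact hx'.trans_le (le_biconj_of_minorant f z c hz x')
  · exact fun x => biconj_le_of_minorant f _ _ fun z c hz => hz x
  · intro g hgb hg hl hgf x
    by_contra! hlt
    obtain ⟨r, hr1, hr2⟩ := EReal.lt_iff_exists_real_btwn.1 hlt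
    obtain ⟨y, a, hya, hr⟩ := exists_minorant g hgb hg hl x r hr2
    have h1 := le_biconj_of_minorant f y a (fun x' => (hya x').trans (hgf x')) x
    exact absurd hr1 (not_lt.2 ((EReal.coe_le_coe_iff.2 hr).trans h1))
end

section
/- Let H be a real Hilbert space, let f : H → ℝ ∪ {+∞} be proper, convex, and lower semicontinuous, and let ε > 0. Then the Moreau envelope ᵋf : H → ℝ is Fréchet differentiable at every x ∈ H, with gradient ∇ᵋf(x) = ε⁻¹( x − Prox_{εf}(x) ), and the gradient map x ↦ ∇ᵋf(x) is Lipschitz continuous with constant ε⁻¹. -/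
/-- `p` minimizes `z ↦ f z + (1/(2ε))‖x - z‖²` over `H`, i.e. `p = Prox_{εf}(x)`. -/
def IsProxPt {H : Type*} [NormedAddCommGroup H] [InnerProductSpace ℝ H]
    (f : H → EReal) (ε : ℝ) (x p : H) : Prop :=
  ∀ z : H, f p + ((1 / (2 * ε) * ‖x - p‖ ^ 2 : ℝ) : EReal)
    ≤ f z + ((1 / (2 * ε) * ‖x - z‖ ^ 2 : ℝ) : EReal)

lemma prox_real {H : Type*} [NormedAddCommGroup H] [InnerProductSpace ℝ H]
    (f : H → EReal) (hbot : ∀ z, f z ≠ ⊥) (hproper : ∃ z, f z ≠ ⊤)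
    (ε : ℝ) (x p : H) (hp : IsProxPt f ε x p) : ∃ a : ℝ, f p = (a : EReal) := by
  obtain ⟨z, hz⟩ := hproper
  have h := hp z
  have hne : f p ≠ ⊤ := by
    intro htop
    rw [htop, EReal.top_add_coe, ← EReal.coe_toReal hz (hbot z), ← EReal.coe_add] at h
    exact EReal.coe_ne_top _ (top_le_iff.mp h)
  exact ⟨(f p).toReal, (EReal.coe_toReal hne (hbot p)).symm⟩

lemma prox_subgrad {H : Type*} [NormedAddCommGroup H] [InnerProductSpace ℝ H]
    (f : H → EReal) (hconv : ConvexE f)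
    (ε : ℝ) (hε : 0 < ε) (x p : H) (hp : IsProxPt f ε x p) (a : ℝ) (ha : f p = (a : EReal))
    (z : H) (b : ℝ) (hb : f z = (b : EReal)) :
    a + inner ℝ (ε⁻¹ • (x - p)) (z - p) ≤ b := by
  have key : ∀ t : ℝ, 0 < t → t < 1 →
      a + inner ℝ (ε⁻¹ • (x - p)) (z - p) ≤ b + t * (1 / (2 * ε) * ‖z - p‖ ^ 2) := by
    intro t ht ht1
    have h1 := hp ((1 - t) • p + t • z)
    have h2 := hconv p z (1 - t) t (by linarith) ht.le (by ring)
    have h3 := h1.trans (add_le_add_left h2 _)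
    rw [ha, hb] at h3
    norm_cast at h3
    have e : x - ((1 - t) • p + t • z) = (x - p) - t • (z - p) := by module
    rw [e, norm_sub_sq_real (x - p), norm_smul, inner_smul_right, mul_pow, Real.norm_eq_abs, sq_abs] at h3
    rw [real_inner_smul_left]
    set q := inner ℝ (x - p) (z - p)
    have h4 : t * (a + ε⁻¹ * q) ≤ t * (b + t * (1 / (2 * ε) * ‖z - p‖ ^ 2)) := by
      have e2 : 1 / (2 * ε) * (‖x - p‖ ^ 2 - 2 * (t * q) + t ^ 2 * ‖z - p‖ ^ 2)
        = 1 / (2 * ε) * ‖x - p‖ ^ 2 - t * (ε⁻¹ * q) + t * (t * (1 / (2 * ε) * ‖z - p‖ ^ 2)) := by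
        field_simp
      rw [e2] at h3
      linarith
    exact le_of_mul_le_mul_left h4 ht
  have hlim : Filter.Tendsto (fun t : ℝ => b + t * (1 / (2 * ε) * ‖z - p‖ ^ 2))
      (nhdsWithin 0 (Set.Ioi 0)) (nhds b) := by
    have : Continuous (fun t : ℝ => b + t * (1 / (2 * ε) * ‖z - p‖ ^ 2)) := by fun_prop
    have h := this.tendsto 0
    simp only [zero_mul, add_zero] at h
    exact h.mono_left nhdsWithin_le_nhds
  refine ge_of_tendsto hlim ?_
  filter_upwards [Ioo_mem_nhdsGT (zero_lt_one (α := ℝ))] with t ht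
  exact key t ht.1 ht.2

/-- the Moreau envelope `ᵋf` (here `m`, its real-valued version) is
Fréchet differentiable everywhere, with gradient `∇ᵋf(x) = ε⁻¹(x − Prox_{εf}(x))`,
and the gradient map is Lipschitz continuous with constant `ε⁻¹`. -/
theorem stmt16 {H : Type*} [NormedAddCommGroup H] [InnerProductSpace ℝ H]
    [CompleteSpace H]
    (f : H → EReal) (hbot : ∀ z, f z ≠ ⊥) (hproper : ∃ z, f z ≠ ⊤)
    (hconv : ConvexE f) (hlsc : LowerSemicontinuous f)
    (ε : ℝ) (hε : 0 < ε) (m : H → ℝ)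
    (hm : ∀ x : H, (m x : EReal) = ⨅ z : H, f z + ((1 / (2 * ε) * ‖x - z‖ ^ 2 : ℝ) : EReal)) :
    (∀ x p : H, IsProxPt f ε x p → HasGradientAt m (ε⁻¹ • (x - p)) x) ∧
    (∀ x x' p p' : H, IsProxPt f ε x p → IsProxPt f ε x' p' →
      ‖ε⁻¹ • (x - p) - ε⁻¹ • (x' - p')‖ ≤ ε⁻¹ * ‖x - x'‖) := by
  constructor
  · intro x p hp
    obtain ⟨a, ha⟩ := prox_real f hbot hproper ε x p hp
    have hmx : m x = a + 1 / (2 * ε) * ‖x - p‖ ^ 2 := by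
      have : (m x : EReal) = ((a + 1 / (2 * ε) * ‖x - p‖ ^ 2 : ℝ) : EReal) := by
        rw [hm x, EReal.coe_add, ← ha]
        exact le_antisymm (iInf_le _ p) (le_iInf hp)
      exact_mod_cast this
    have hup : ∀ y, m y - m x - inner ℝ (ε⁻¹ • (x - p)) (y - x) ≤ 1 / (2 * ε) * ‖y - x‖ ^ 2 := by
      intro y
      have h : m y ≤ a + 1 / (2 * ε) * ‖y - p‖ ^ 2 := by
        have : (m y : EReal) ≤ ((a + 1 / (2 * ε) * ‖y - p‖ ^ 2 : ℝ) : EReal) := by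
          rw [hm y, EReal.coe_add, ← ha]
          exact iInf_le _ p
        exact_mod_cast this
      have e : y - p = (x - p) + (y - x) := by abel
      rw [e, norm_add_sq_real] at h
      rw [hmx, real_inner_smul_left]
      have e2 : 1 / (2 * ε) * (‖x - p‖ ^ 2 + 2 * inner ℝ (x - p) (y - x) + ‖y - x‖ ^ 2)
        = 1 / (2 * ε) * ‖x - p‖ ^ 2 + ε⁻¹ * inner ℝ (x - p) (y - x)
          + 1 / (2 * ε) * ‖y - x‖ ^ 2 := by
        field_simp
      linarith
    have hlow : ∀ y, 0 ≤ m y - m x - inner ℝ (ε⁻¹ • (x - p)) (y - x) := by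
      intro y
      have h : m x + inner ℝ (ε⁻¹ • (x - p)) (y - x) ≤ m y := by
        rw [← EReal.coe_le_coe_iff, hm y]
        refine le_iInf fun z => ?_
        by_cases hz : f z = ⊤
        · rw [hz, EReal.top_add_coe]; exact le_top
        · obtain ⟨b, hb⟩ : ∃ b : ℝ, f z = (b : EReal) :=
            ⟨(f z).toReal, (EReal.coe_toReal hz (hbot z)).symm⟩
          have hs := prox_subgrad f hconv ε hε x p hp a ha z b hb
          rw [hb, ← EReal.coe_add, EReal.coe_le_coe_iff, hmx]
          rw [real_inner_smul_left] at hs ⊢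
          have hsq : 0 ≤ 1 / (2 * ε) * ‖(y - z) - (x - p)‖ ^ 2 := by positivity
          rw [norm_sub_sq_real] at hsq
          have e1 : inner ℝ (x - p) (z - p) = inner ℝ (x - p) (y - x) + ‖x - p‖ ^ 2
              - inner ℝ (y - z) (x - p) := by
            rw [← real_inner_self_eq_norm_sq, real_inner_comm (x - p) (y - z), ← inner_add_right,
              ← inner_sub_right]
            congr 1; abel
          rw [e1] at hs
          have e2 : 1 / (2 * ε) * (‖y - z‖ ^ 2 - 2 * inner ℝ (y - z) (x - p) + ‖x - p‖ ^ 2)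
            = 1 / (2 * ε) * ‖y - z‖ ^ 2 - ε⁻¹ * inner ℝ (y - z) (x - p)
              + 1 / (2 * ε) * ‖x - p‖ ^ 2 := by field_simp
          have e3 : ε⁻¹ * (inner ℝ (x - p) (y - x) + ‖x - p‖ ^ 2 - inner ℝ (y - z) (x - p))
            = ε⁻¹ * inner ℝ (x - p) (y - x) + 2 * (1 / (2 * ε) * ‖x - p‖ ^ 2)
              - ε⁻¹ * inner ℝ (y - z) (x - p) := by field_simp
          linarith
      linarith
    rw [hasGradientAt_iff_isLittleO]
    have hO : (fun y => m y - m x - inner ℝ (ε⁻¹ • (x - p)) (y - x)) =O[nhds x]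
        fun y => ‖y - x‖ ^ 2 := by
      refine Asymptotics.IsBigO.of_bound (1 / (2 * ε)) (Filter.Eventually.of_forall fun y => ?_)
      rw [Real.norm_of_nonneg (hlow y), Real.norm_of_nonneg (by positivity)]
      exact hup y
    refine hO.trans_isLittleO ?_
    exact Asymptotics.isLittleO_pow_sub_sub x one_lt_two
  · intro x x' p p' hp hp'
    obtain ⟨a, ha⟩ := prox_real f hbot hproper ε x p hp
    obtain ⟨a', ha'⟩ := prox_real f hbot hproper ε x' p' hp'
    have h1 := prox_subgrad f hconv ε hε x p hp a ha p' a' ha'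
    have h2 := prox_subgrad f hconv ε hε x' p' hp' a' ha' p a ha
    rw [← smul_sub, norm_smul, Real.norm_of_nonneg (by positivity)]
    refine mul_le_mul_of_nonneg_left ?_ (by positivity)
    rw [real_inner_smul_left] at h1 h2
    have h3 : ε⁻¹ * (inner ℝ (x - p) (p' - p) + inner ℝ (x' - p') (p - p')) ≤ 0 := by linarith
    have h4 : inner ℝ (x - p) (p' - p) + inner ℝ (x' - p') (p - p') ≤ 0 := by
      by_contra hc
      push Not at hc
      have := mul_pos (inv_pos.mpr hε) hc
      linarith
    have h5 : inner ℝ (x - p) (p' - p) + inner ℝ (x' - p') (p - p')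
        = - inner ℝ ((x - p) - (x' - p')) (p - p') := by
      rw [inner_sub_left (x - p), ← neg_sub p p', inner_neg_right]; ring
    have e : x - x' = ((x - p) - (x' - p')) + (p - p') := by abel
    refine (sq_le_sq₀ (norm_nonneg _) (norm_nonneg _)).mp ?_
    rw [e, norm_add_sq_real]
    nlinarith [sq_nonneg ‖p - p'‖]
end
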